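/- arXiv:1811.01616 — 10 statements merged into one kernel-verified Lean document; each statement's English description precedes it below -/
import Mathlib

section
/- Let n be a positive integer, let a > 0 and α > 0, and define the enthalpy w(r) = a·(1 − r^n) for r ∈ [0,1], the mean density G(r) = r^{-3} ∫_0^r 4π w(s)^α s² ds for r ∈ (0,1], and g(r) = 3·√(G(r)/2). Then there exist constants c₁, c₂ > 0 such that c₁ r^n ≤ − r·g'(r)/g(r) ≤ c₂ r^n for all r ∈ (0,1]. -/
open Real Set

lemma exists_one_sub_one_sub_rpow_le {α : ℝ} (hα : 0 < α) :
    ∃ C : ℝ, 0 < C ∧ ∀ x ∈ Icc (0 : ℝ) 1, 1 - (1 - x) ^ α ≤ C * x := by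
  rcases le_total 1 α with h | h
  · refine ⟨α, hα, fun x hx => ?_⟩
    have := one_add_mul_self_le_rpow_one_add (s := -x) (by linarith [hx.2]) h
    rw [← sub_eq_add_neg] at this
    linarith
  · refine ⟨1, one_pos, fun x hx => ?_⟩
    have := Real.self_le_rpow_of_le_one (x := 1 - x) (by linarith [hx.2]) (by linarith [hx.1]) h
    linarith

lemma exists_mul_sub_le_rpow_sub_rpow {α : ℝ} (hα : 0 < α) :
    ∃ c : ℝ, 0 < c ∧ ∀ u v : ℝ, 0 ≤ v → v ≤ u → 1 / 2 ≤ u → u ≤ 1 →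
      c * (u - v) ≤ u ^ α - v ^ α := by
  have split {x : ℝ} (hx : 0 < x) : x ^ α = x * x ^ (α - 1) := by
    rw [Real.rpow_sub_one hx.ne']; field_simp
  rcases le_total 1 α with h | h
  · refine ⟨(1 / 2 : ℝ) ^ (α - 1), by positivity, fun u v hv hvu hu hu1 => ?_⟩
    have hu0 : 0 < u := by linarith
    have hhalf : (1 / 2 : ℝ) ^ (α - 1) ≤ u ^ (α - 1) :=
      Real.rpow_le_rpow (by norm_num) hu (by linarith)
    have hvpow : v ^ α ≤ v * u ^ (α - 1) := by
      rcases hv.eq_or_lt with rfl | hv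
      · simp [Real.zero_rpow hα.ne']
      · rw [split hv]
        exact mul_le_mul_of_nonneg_left (Real.rpow_le_rpow hv.le hvu (by linarith)) hv.le
    rw [split hu0]
    nlinarith
  · refine ⟨α, hα, fun u v hv hvu hu hu1 => ?_⟩
    have hu0 : 0 < u := by linarith
    have hbern := rpow_one_add_le_one_add_mul_self (s := v / u - 1)
      (by linarith [div_nonneg hv hu0.le]) hα.le h
    rw [add_sub_cancel, Real.div_rpow hv hu0.le, div_le_iff₀ (by positivity)] at hbern
    have hone : 1 ≤ u ^ (α - 1) :=
      Real.one_le_rpow_of_pos_of_le_one_of_nonpos hu0 hu1 (by linarith)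
    have heq : (1 + α * (v / u - 1)) * u ^ α = u ^ α - α * (u - v) * u ^ (α - 1) := by
      rw [split hu0]; field_simp; ring
    rw [heq] at hbern
    nlinarith [mul_nonneg hα.le (sub_nonneg.2 hvu)]

lemma integral_mul_sq_bounds_of_antitoneOn {h : ℝ → ℝ} (hc : Continuous h) {p q : ℝ}
    (hpq : p ≤ q) (hanti : AntitoneOn h (Icc p q)) :
    4 * π * h q * ((q ^ 3 - p ^ 3) / 3) ≤ ∫ s in p..q, 4 * π * h s * s ^ 2 ∧
      ∫ s in p..q, 4 * π * h s * s ^ 2 ≤ 4 * π * h p * ((q ^ 3 - p ^ 3) / 3) := by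
  have hconst (y : ℝ) : ∫ s in p..q, 4 * π * y * s ^ 2 = 4 * π * y * ((q ^ 3 - p ^ 3) / 3) := by
    rw [intervalIntegral.integral_const_mul, integral_pow]; norm_num
  constructor <;> rw [← hconst] <;>
    refine intervalIntegral.integral_mono_on hpq
      (Continuous.intervalIntegrable (by fun_prop) _ _)
      (Continuous.intervalIntegrable (by fun_prop) _ _) fun s hs => ?_
  · have := hanti hs (right_mem_Icc.2 hpq) hs.2
    gcongr
  · have := hanti (left_mem_Icc.2 hpq) hs hs.1
    gcongr

lemma neg_mul_deriv_div_eq_of_eq_sqrt {F g : ℝ → ℝ} {f r : ℝ} (hF : HasDerivAt F f r)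
    (hFr : 0 < F r) (hr : 0 < r) (hg : ∀ x : ℝ, 0 < x → g x = 3 * √(F x / x ^ 3 / 2)) :
    -(r * deriv g r / g r) = (3 * F r - r * f) / (2 * F r) := by
  have hpos : 0 < F r / r ^ 3 / 2 := by positivity
  have hderiv := ((((hF.div (hasDerivAt_pow 3 r) (by positivity)).div_const 2).sqrt
    hpos.ne').const_mul 3).congr_of_eventuallyEq
      (Filter.eventually_of_mem (Ioi_mem_nhds hr) fun x hx => hg x hx)
  rw [hderiv.deriv, hg r hr]
  simp only [Pi.div_apply]
  have hsq := Real.sq_sqrt hpos.le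
  have hs := Real.sqrt_pos.2 hpos
  set S := √(F r / r ^ 3 / 2)
  have hFS : F r = 2 * r ^ 3 * S ^ 2 := by rw [hsq]; field_simp
  rw [hFS]
  field_simp
  push_cast
  ring

/-- Lemma 1.1: the explicit enthalpy `w(r) = a(1 - r^n)` satisfies property (1.19):
`c₁ r^n ≤ -r g'(r)/g(r) ≤ c₂ r^n` on `(0,1]`, where
`G(r) = r^{-3} ∫_0^r 4π w(s)^α s² ds` and `g(r) = 3 √(G(r)/2)`. -/
theorem enthalpy_log_deriv_bounds (n : ℕ) (hn : 0 < n) (a α : ℝ) (ha : 0 < a) (hα : 0 < α)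
    (w G g : ℝ → ℝ)
    (hw : ∀ r : ℝ, w r = a * (1 - r ^ n))
    (hG : ∀ r : ℝ, 0 < r → G r = (∫ s in (0:ℝ)..r, 4 * π * (w s) ^ α * s ^ 2) / r ^ 3)
    (hg : ∀ r : ℝ, 0 < r → g r = 3 * Real.sqrt (G r / 2)) :
    ∃ c₁ c₂ : ℝ, 0 < c₁ ∧ 0 < c₂ ∧ ∀ r ∈ Set.Ioc (0:ℝ) 1,
      c₁ * r ^ n ≤ -(r * deriv g r / g r) ∧ -(r * deriv g r / g r) ≤ c₂ * r ^ n := by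
  obtain ⟨C, hC, hCb⟩ := exists_one_sub_one_sub_rpow_le hα
  obtain ⟨c, hc, hcb⟩ := exists_mul_sub_le_rpow_sub_rpow hα
  have hhalf : (1 / 2 : ℝ) ^ n ≤ 1 / 2 := pow_le_of_le_one (by norm_num) (by norm_num) hn.ne'
  have hwc : Continuous w := by
    rw [funext hw]; fun_prop
  have hcont : Continuous fun s => w s ^ α := hwc.rpow_const fun _ => Or.inr hα.le
  have hwα {s : ℝ} (h0 : 0 ≤ s) (h1 : s ≤ 1) : w s ^ α = a ^ α * (1 - s ^ n) ^ α := by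
    rw [hw, Real.mul_rpow ha.le (sub_nonneg.2 (pow_le_one₀ h0 h1))]
  have hanti : AntitoneOn (fun s => w s ^ α) (Icc 0 1) := fun s hs t ht hst => by
    have ht1 := pow_le_one₀ (n := n) ht.1 ht.2
    have hpow := pow_le_pow_left₀ hs.1 hst n
    simp only [hw]
    exact Real.rpow_le_rpow (mul_nonneg ha.le (by linarith))
      (mul_le_mul_of_nonneg_left (by linarith) ha.le) hα.le
  have hA : 0 < a ^ α := by positivity
  set A := a ^ α
  set K := (1 / 2 : ℝ) ^ α
  have hK : 0 < K := by positivity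
  refine ⟨3 * c / 32, 12 * C / K, by positivity, by positivity, fun r ⟨hr0, hr1⟩ => ?_⟩
  set F : ℝ → ℝ := fun x => ∫ s in (0 : ℝ)..x, 4 * π * w s ^ α * s ^ 2
  have hfc : Continuous fun s => 4 * π * w s ^ α * s ^ 2 := by fun_prop
  have hF : HasDerivAt F (4 * π * w r ^ α * r ^ 2) r :=
    intervalIntegral.integral_hasDerivAt_right (hfc.intervalIntegrable _ _)
      hfc.stronglyMeasurable.stronglyMeasurableAtFilter hfc.continuousAt
  have hx1 : r ^ n ≤ 1 := pow_le_one₀ hr0.le hr1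
  have hx0 : 0 < r ^ n := by positivity
  have hθ : (r / 2) ^ n ≤ r ^ n / 2 := by
    rw [div_eq_mul_one_div r, mul_pow, div_eq_mul_one_div (r ^ n)]
    gcongr
  have hinner := integral_mul_sq_bounds_of_antitoneOn hcont (p := 0) (q := r / 2) (by linarith)
    (hanti.mono (Icc_subset_Icc le_rfl (by linarith)))
  have houter := integral_mul_sq_bounds_of_antitoneOn hcont (p := r / 2) (q := r) (by linarith)
    (hanti.mono (Icc_subset_Icc (by linarith) hr1))
  have hfull := integral_mul_sq_bounds_of_antitoneOn hcont (p := 0) (q := r) hr0.le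
    (hanti.mono (Icc_subset_Icc le_rfl hr1))
  have hsplit : F r = (∫ s in (0 : ℝ)..(r / 2), 4 * π * w s ^ α * s ^ 2) +
      ∫ s in (r / 2)..r, 4 * π * w s ^ α * s ^ 2 :=
    (intervalIntegral.integral_add_adjacent_intervals (hfc.intervalIntegrable _ _)
      (hfc.intervalIntegrable _ _)).symm
  have hmid := hwα (s := r / 2) (by linarith) (by linarith)
  have hr := hwα hr0.le hr1
  have hzero : w 0 ^ α = A := by rw [hwα le_rfl zero_le_one]; simp [hn.ne']
  simp only [hmid, hr, hzero] at hinner houter hfull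
  have hgap := hcb (1 - (r / 2) ^ n) (1 - r ^ n) (by linarith) (by linarith) (by linarith)
    (by linarith [pow_pos (half_pos hr0) n])
  have hdrop := hCb (r ^ n) ⟨hx0.le, hx1⟩
  have hKu : K ≤ (1 - (r / 2) ^ n) ^ α := Real.rpow_le_rpow (by norm_num) (by linarith) hα.le
  have hv : 0 ≤ (1 - r ^ n) ^ α := Real.rpow_nonneg (by linarith) _
  rw [hr] at hF
  set u := (1 - (r / 2) ^ n) ^ α
  set v := (1 - r ^ n) ^ α
  set x := r ^ n
  have hM : 0 < π * A * r ^ 3 := by positivity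
  set M := π * A * r ^ 3 with hMdef
  have hFupper : F r ≤ 4 / 3 * M := by
    refine hfull.2.trans_eq ?_
    rw [hMdef]; ring
  have hFlower : M * (u / 6 + 7 / 6 * v) ≤ F r := by
    rw [hsplit]
    refine le_trans (le_of_eq ?_) (add_le_add hinner.1 houter.1)
    rw [hMdef]; ring
  have hFK : M * K / 6 ≤ F r := by nlinarith
  have hFpos : 0 < F r := lt_of_lt_of_le (by positivity) hFK
  have hgF : ∀ y : ℝ, 0 < y → g y = 3 * √(F y / y ^ 3 / 2) := fun y hy => by
    rw [hg y hy, hG y hy]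
  have hnum : 3 * F r - r * (4 * π * (A * v) * r ^ 2) = 3 * F r - 4 * M * v := by
    rw [hMdef]; ring
  rw [neg_mul_deriv_div_eq_of_eq_sqrt hF hFpos hr0 hgF, hnum, le_div_iff₀ (by positivity),
    div_le_iff₀ (by positivity)]
  have hgap' : c * x / 2 ≤ u - v := by nlinarith
  constructor
  · calc 3 * c / 32 * x * (2 * F r) ≤ 3 * c / 32 * x * (2 * (4 / 3 * M)) := by gcongr
      _ = M * (c * x / 2) / 2 := by ring
      _ ≤ M * (u - v) / 2 := by gcongr
      _ ≤ 3 * F r - 4 * M * v := by linarith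
  · calc 3 * F r - 4 * M * v ≤ 4 * M * (1 - v) := by linarith
      _ ≤ 4 * M * (C * x) := by gcongr
      _ = 12 * C / K * x * (2 * (M * K / 6)) := by field_simp; ring
      _ ≤ 12 * C / K * x * (2 * F r) := by gcongr
end

section
/- Let G > 0, χ₀ > 0, χ₁ < 0, and let T ≥ χ₀/(−χ₁). Then there exists no twice-differentiable function χ : [0,T] → ℝ with χ(s) > 0 for all s ∈ [0,T], χ(0) = χ₀, χ'(0) = χ₁, and χ''(s) = − G/χ(s)² for all s ∈ [0,T]. In other words, every positive solution of the dust ODE with inward initial velocity χ₁ < 0 ceases to be positive no later than time χ₀/(−χ₁). -/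
/-- If the derivative of `f` on `[a, b]` is at most `C`, then `f` lies below the line of slope `C`
through `(a, f a)`. -/
theorem le_add_mul_sub_of_hasDerivWithinAt_le {f f' : ℝ → ℝ} {a b C : ℝ}
    (hf : ∀ s ∈ Set.Icc a b, HasDerivWithinAt f (f' s) (Set.Icc a b) s)
    (hC : ∀ s ∈ Set.Icc a b, f' s ≤ C) {t : ℝ} (ht : t ∈ Set.Icc a b) :
    f t ≤ f a + C * (t - a) := by
  have hg : ∀ s ∈ Set.Icc a b,
      HasDerivWithinAt (fun x => f x - C * x) (f' s - C * 1) (Set.Icc a b) s := fun s hs =>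
    (hf s hs).sub ((hasDerivWithinAt_id s _).const_mul C)
  have hanti : AntitoneOn (fun x => f x - C * x) (Set.Icc a b) :=
    antitoneOn_of_hasDerivWithinAt_nonpos (convex_Icc a b)
      (fun s hs => (hg s hs).continuousWithinAt)
      (fun s hs => (hg s (interior_subset hs)).mono interior_subset)
      (fun s hs => by linarith [hC s (interior_subset hs)])
  have hle : f t - C * t ≤ f a - C * a := hanti (Set.left_mem_Icc.2 (ht.1.trans ht.2)) ht ht.1
  linarith

/-- Finite-time gravitational collapse for the dust ODE: no positive solution of
`χ'' = -G/χ²` with `χ(0) = χ₀ > 0` and inward velocity `χ'(0) = χ₁ < 0` can stay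
positive up to any time `T ≥ χ₀/(-χ₁)`. -/
theorem dust_collapse_in_finite_time (G χ₀ χ₁ T : ℝ) (hG : 0 < G) (h0 : 0 < χ₀)
    (h1 : χ₁ < 0) (hT : χ₀ / (-χ₁) ≤ T) :
    ¬ ∃ χ χ' χ'' : ℝ → ℝ,
      (∀ s ∈ Set.Icc (0:ℝ) T,
        HasDerivWithinAt χ (χ' s) (Set.Icc 0 T) s ∧
        HasDerivWithinAt χ' (χ'' s) (Set.Icc 0 T) s ∧
        0 < χ s ∧ χ'' s = -G / (χ s) ^ 2) ∧
      χ 0 = χ₀ ∧ χ' 0 = χ₁ := by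
  rintro ⟨χ, χ', χ'', h, rfl, rfl⟩
  have hT0 : 0 ≤ T := (div_pos h0 (neg_pos.2 h1)).le.trans hT
  have hvel : ∀ s ∈ Set.Icc (0:ℝ) T, χ' s ≤ χ' 0 := fun s hs => by
    simpa using le_add_mul_sub_of_hasDerivWithinAt_le (C := 0) (fun s hs => (h s hs).2.1)
      (fun s hs => by
        rw [(h s hs).2.2.2]
        exact div_nonpos_of_nonpos_of_nonneg (neg_nonpos.2 hG.le) (sq_nonneg _)) hs
  have hpos := le_add_mul_sub_of_hasDerivWithinAt_le (fun s hs => (h s hs).1) hvel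
    (Set.right_mem_Icc.2 hT0)
  have hχT := (h T (Set.right_mem_Icc.2 hT0)).2.2.1
  rw [div_le_iff₀ (neg_pos.2 h1)] at hT
  linarith
end

section
/- Let γ ∈ (1, 4/3), set γ̄ = 4/3 − γ, and fix a positive integer a. For integers n with n·γ̄ > 1 define δ(n) = 2·(4/3 − γ − 1/n) > 0. Then there exists n* = n*(γ, a) such that for all integers n ≥ n*: ⌊2/(3δ(n))⌋·δ(n) + 2/n < 2/3 < (⌊2/(3δ(n))⌋ + 1)·δ(n) − a/n, and moreover ⌊2/(3δ(n))⌋ = ⌊1/(3γ̄)⌋. -/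
/-- Lemma 2.3: for `γ ∈ (1, 4/3)`, `γ̄ = 4/3 - γ` and `δ(n) = 2(4/3 - γ - 1/n)`, for all
sufficiently large `n` we have `⌊2/(3δ)⌋ δ + 2/n < 2/3 < (⌊2/(3δ)⌋+1) δ - a/n` and
`⌊2/(3δ(n))⌋ = ⌊1/(3γ̄)⌋`. -/
theorem delta_floor_inequalities (γ : ℝ) (hγ : γ ∈ Set.Ioo (1:ℝ) (4/3))
    (γbar : ℝ) (hγbar : γbar = 4/3 - γ) (a : ℕ) (ha : 0 < a) :
    ∃ nstar : ℕ, ∀ n : ℕ, nstar ≤ n → 1 < (n:ℝ) * γbar →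
      ∀ δ : ℝ, δ = 2 * (4/3 - γ - 1/(n:ℝ)) →
        0 < δ ∧
        (⌊2 / (3 * δ)⌋ : ℝ) * δ + 2/(n:ℝ) < 2/3 ∧
        2/3 < ((⌊2 / (3 * δ)⌋ : ℝ) + 1) * δ - (a:ℝ)/(n:ℝ) ∧
        ⌊2 / (3 * δ)⌋ = ⌊1 / (3 * γbar)⌋ := by
  obtain ⟨h1, h2⟩ := hγ
  have hg : 0 < γbar := by linarith
  have hg3 : γbar < 1 / 3 := by linarith
  obtain ⟨m, hm⟩ : ∃ m : ℤ, m = ⌊1 / (3 * γbar)⌋ := ⟨_, rfl⟩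
  obtain ⟨hm_le, hm_lt⟩ := Int.floor_eq_iff.mp hm.symm
  rw [le_div_iff₀ (by positivity)] at hm_le
  rw [div_lt_iff₀ (by positivity)] at hm_lt
  have hm1 : 1 ≤ m := by
    rw [hm, Int.le_floor, Int.cast_one, le_div_iff₀ (by positivity)]
    linarith
  have hε : 0 < 2 * ((m + 1) * γbar - 1 / 3) := by linarith
  obtain ⟨N, hN⟩ := exists_nat_gt ((2 * (m + 1) + a) / (2 * ((m + 1) * γbar - 1 / 3)))
  rw [div_lt_iff₀ hε] at hN
  refine ⟨N, fun n hn hng δ hδ => ?_⟩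
  have hn0 : 0 < (n : ℝ) := pos_of_mul_pos_left (by linarith) hg.le
  have hinv : 0 < 1 / (n : ℝ) := by positivity
  have hδ0 : 0 < δ := by
    have : 1 / (n : ℝ) < γbar := by rwa [div_lt_iff₀ hn0, mul_comm]
    linarith
  rw [← hγbar] at hδ
  have hlower : (m : ℝ) * δ + 2 / (n : ℝ) < 2 / 3 := by
    have key : (m : ℝ) * δ + 2 / (n : ℝ) = 2 * (m * γbar) - 2 * ((m - 1) * (1 / (n : ℝ))) := by
      rw [hδ]; ring
    rw [key]
    rcases hm1.eq_or_lt with h | h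
    · rw [← h]; push_cast; linarith
    · have hm_gt : (1 : ℝ) < m := by exact_mod_cast h
      have := mul_pos (sub_pos.mpr hm_gt) hinv
      linarith
  have hupper : 2 / 3 < ((m : ℝ) + 1) * δ - (a : ℝ) / (n : ℝ) := by
    have hNn : (N : ℝ) ≤ n := by exact_mod_cast hn
    have hlt := hN.trans_le (mul_le_mul_of_nonneg_right hNn hε.le)
    rw [← div_lt_iff₀' hn0] at hlt
    have key : ((m : ℝ) + 1) * δ - (a : ℝ) / (n : ℝ)
        = 2 * ((m + 1) * γbar) - (2 * (m + 1) + a) / (n : ℝ) := by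
      rw [hδ]; ring
    rw [key]
    linarith
  have hfloor : ⌊2 / (3 * δ)⌋ = m := by
    have ha_div : 0 ≤ (a : ℝ) / (n : ℝ) := by positivity
    have h2_div : 0 < 2 / (n : ℝ) := by positivity
    rw [Int.floor_eq_iff, le_div_iff₀ (by positivity), div_lt_iff₀ (by positivity)]
    constructor <;> linarith
  rw [hfloor]
  exact ⟨hδ0, hlower, hupper, hm⟩
end

section
/- Let n be a positive integer, let λ ∈ (0,1), and let β ∈ ℝ satisfy β − λ + 2/n > −1. Then there exists a constant C > 0, depending only on n, λ, β, such that for all r ∈ (0,1] and all τ ∈ (0,1]: ∫_0^τ t^β · p_{λ,−2/n}(r^n/t) dt ≤ C · τ^{β+1} · p_{λ,−2/n}(r^n/τ), where p_{λ,−2/n}(x) = x^{λ − 2/n}/(1+x)^{λ} for x > 0. -/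
open MeasureTheory in
/-- Since `t ↦ 1 / (1 + a / t) ^ l` is increasing on `(0, τ]` for `0 ≤ l`, it can be bounded by its
value at `τ`, which leaves the integral of a power of `t`. -/
theorem integral_rpow_mul_div_rpow_le {l μ β a τ : ℝ} (hl : 0 ≤ l) (hβ : -1 < β - μ)
    (ha : 0 < a) (hτ : 0 < τ) :
    (∫ t in (0:ℝ)..τ, t ^ β * ((a / t) ^ μ / (1 + a / t) ^ l))
      ≤ 1 / (β - μ + 1) * τ ^ (β + 1) * ((a / τ) ^ μ / (1 + a / τ) ^ l) := by
  have hpow : ∀ t : ℝ, 0 < t → t ^ β * (a / t) ^ μ = a ^ μ * t ^ (β - μ) := fun t ht ↦ by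
    rw [Real.div_rpow ha.le ht.le, Real.rpow_sub ht]
    ring
  calc (∫ t in (0:ℝ)..τ, t ^ β * ((a / t) ^ μ / (1 + a / t) ^ l))
      ≤ ∫ t in (0:ℝ)..τ, a ^ μ / (1 + a / τ) ^ l * t ^ (β - μ) := by
        have hint : IntervalIntegrable (fun t : ℝ ↦ a ^ μ / (1 + a / τ) ^ l * t ^ (β - μ))
            volume 0 τ := (intervalIntegral.intervalIntegrable_rpow' hβ).const_mul _
        rw [intervalIntegral.integral_of_le hτ.le, intervalIntegral.integral_of_le hτ.le]
        refine integral_mono_of_nonneg ?_ hint.1 ?_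
        · filter_upwards [ae_restrict_mem measurableSet_Ioc] with t ht
          have := ht.1
          simp only [Pi.zero_apply]
          positivity
        · filter_upwards [ae_restrict_mem measurableSet_Ioc] with t ht
          obtain ⟨ht0, htτ⟩ := ht
          rw [← mul_div_assoc, hpow t ht0, div_mul_eq_mul_div]
          gcongr
    _ = 1 / (β - μ + 1) * τ ^ (β + 1) * ((a / τ) ^ μ / (1 + a / τ) ^ l) := by
        have hγ : β - μ + 1 ≠ 0 := by linarith
        rw [intervalIntegral.integral_const_mul, integral_rpow (Or.inl hβ),
          Real.zero_rpow hγ, Real.rpow_add_one hτ.ne', Real.rpow_add_one hτ.ne', sub_zero]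
        linear_combination -(τ / (β - μ + 1) / (1 + a / τ) ^ l) * hpow τ hτ

/-- Lemma 2.14 (i): the weighted integral estimate
`∫_0^τ t^β p_{λ,-2/n}(r^n/t) dt ≲ τ^{β+1} p_{λ,-2/n}(r^n/τ)`, where
`p_{λ,-2/n}(x) = x^{λ-2/n}/(1+x)^λ`. -/
theorem weighted_integral_estimate_below (n : ℕ) (hn : 0 < n) (lam : ℝ)
    (hlam : lam ∈ Set.Ioo (0:ℝ) 1) (β : ℝ) (hβ : -1 < β - lam + 2/(n:ℝ)) :
    ∃ C : ℝ, 0 < C ∧ ∀ r ∈ Set.Ioc (0:ℝ) 1, ∀ τ ∈ Set.Ioc (0:ℝ) 1,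
      (∫ t in (0:ℝ)..τ,
          t ^ β * ((r ^ n / t) ^ (lam - 2/(n:ℝ)) / (1 + r ^ n / t) ^ lam))
        ≤ C * τ ^ (β + 1) * ((r ^ n / τ) ^ (lam - 2/(n:ℝ)) / (1 + r ^ n / τ) ^ lam) := by
  refine ⟨1 / (β - (lam - 2 / (n:ℝ)) + 1), one_div_pos.mpr (by linarith), fun r hr τ hτ ↦ ?_⟩
  exact integral_rpow_mul_div_rpow_le hlam.1.le (by linarith) (pow_pos hr.1 n) hτ.1
end

section
/- Let n be a positive integer, let λ ∈ (0,1), and let b ∈ ℝ satisfy b + 2/n < −1. Then there exists a constant C > 0, depending only on n, λ, b, such that for all r ∈ (0,1] and all τ ∈ (0,1]: ∫_τ^1 t^b · p_{λ,−2/n}(r^n/t) dt ≤ C · τ^{b+1} · p_{λ,−2/n}(r^n/τ), where p_{λ,−2/n}(x) = x^{λ − 2/n}/(1+x)^{λ} for x > 0. -/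
open Real Set

/-- Along the self-similar variable `a / t`, the profile `x ^ (l - s) / (1 + x) ^ l` grows in `t`
at most like `t ^ s`. -/
theorem profile_div_le_of_le {a l s t τ : ℝ} (ha : 0 < a) (hl : 0 ≤ l) (hτ : 0 < τ) (h : τ ≤ t) :
    (a / t) ^ (l - s) / (1 + a / t) ^ l ≤
      (t / τ) ^ s * ((a / τ) ^ (l - s) / (1 + a / τ) ^ l) := by
  have key : ∀ u : ℝ, 0 < u →
      (a / u) ^ (l - s) / (1 + a / u) ^ l = u ^ s / a ^ s * (a / (u + a)) ^ l := by
    intro u hu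
    have e : a / (u + a) = (a / u) / (1 + a / u) := by field_simp
    rw [e, rpow_sub (div_pos ha hu), div_rpow ha.le hu.le s,
      div_rpow (div_pos ha hu).le (by positivity) l]
    have := rpow_pos_of_pos hu s
    have := rpow_pos_of_pos ha s
    field_simp
  have ht : 0 < t := hτ.trans_le h
  rw [key t ht, key τ hτ, div_rpow ht.le hτ.le]
  have hs : 0 < τ ^ s := rpow_pos_of_pos hτ s
  calc t ^ s / a ^ s * (a / (t + a)) ^ l
      ≤ t ^ s / a ^ s * (a / (τ + a)) ^ l := by gcongr
    _ = t ^ s / τ ^ s * (τ ^ s / a ^ s * (a / (τ + a)) ^ l) := by field_simp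

/-- The integral of `t ^ c` over `[τ, 1]` is controlled by its lower endpoint when `c < -1`. -/
theorem integral_rpow_to_one_le {c τ : ℝ} (hc : c < -1) (hτ : 0 < τ) :
    ∫ t in τ..(1 : ℝ), t ^ c ≤ (-(c + 1))⁻¹ * τ ^ (c + 1) := by
  rw [integral_rpow (Or.inr ⟨hc.ne, notMem_uIcc_of_lt hτ one_pos⟩), one_rpow, inv_mul_eq_div,
    ← neg_div_neg_eq (1 - _)]
  have : 0 < -(c + 1) := by linarith
  gcongr
  linarith

/-- Lemma 2.14 (ii): the weighted integral estimate
`∫_τ^1 t^b p_{λ,-2/n}(r^n/t) dt ≲ τ^{b+1} p_{λ,-2/n}(r^n/τ)`, where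
`p_{λ,-2/n}(x) = x^{λ-2/n}/(1+x)^λ`. -/
theorem weighted_integral_estimate_above (n : ℕ) (hn : 0 < n) (lam : ℝ)
    (hlam : lam ∈ Set.Ioo (0:ℝ) 1) (b : ℝ) (hb : b + 2/(n:ℝ) < -1) :
    ∃ C : ℝ, 0 < C ∧ ∀ r ∈ Set.Ioc (0:ℝ) 1, ∀ τ ∈ Set.Ioc (0:ℝ) 1,
      (∫ t in τ..(1:ℝ),
          t ^ b * ((r ^ n / t) ^ (lam - 2/(n:ℝ)) / (1 + r ^ n / t) ^ lam))
        ≤ C * τ ^ (b + 1) * ((r ^ n / τ) ^ (lam - 2/(n:ℝ)) / (1 + r ^ n / τ) ^ lam) := by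
  set s : ℝ := 2 / (n : ℝ)
  have hc : 0 < -(b + s + 1) := by linarith
  refine ⟨(-(b + s + 1))⁻¹, inv_pos.2 hc, fun r hr τ hτ => ?_⟩
  obtain ⟨hτ0, hτ1⟩ := hτ
  have ha : 0 < r ^ n := pow_pos hr.1 n
  generalize r ^ n = a at ha ⊢
  set K := (a / τ) ^ (lam - s) / (1 + a / τ) ^ lam
  have hK : 0 ≤ K := by positivity
  have hpos : ∀ t ∈ uIcc τ 1, 0 < t := fun t ht => by
    rw [uIcc_of_le hτ1] at ht
    exact hτ0.trans_le ht.1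
  have hrpow : ∀ c : ℝ, ContinuousOn (fun t : ℝ => t ^ c) (uIcc τ 1) := fun c =>
    continuousOn_id.rpow_const fun t ht => Or.inl (hpos t ht).ne'
  have hdiv : ContinuousOn (fun t : ℝ => a / t) (uIcc τ 1) :=
    continuousOn_const.div continuousOn_id fun t ht => (hpos t ht).ne'
  have hint : ContinuousOn
      (fun t : ℝ => t ^ b * ((a / t) ^ (lam - s) / (1 + a / t) ^ lam)) (uIcc τ 1) := by
    have hx : ∀ t ∈ uIcc τ 1, 0 < a / t := fun t ht => div_pos ha (hpos t ht)
    have hy : ∀ t ∈ uIcc τ 1, 0 < 1 + a / t := fun t ht => add_pos one_pos (hx t ht)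
    exact (hrpow b).mul ((hdiv.rpow_const fun t ht => Or.inl (hx t ht).ne').div
      ((continuousOn_const.add hdiv).rpow_const fun t ht => Or.inl (hy t ht).ne')
      fun t ht => (rpow_pos_of_pos (hy t ht) lam).ne')
  calc ∫ t in τ..(1 : ℝ), t ^ b * ((a / t) ^ (lam - s) / (1 + a / t) ^ lam)
      ≤ ∫ t in τ..(1 : ℝ), t ^ (b + s) * (K / τ ^ s) := by
        refine intervalIntegral.integral_mono_on hτ1 hint.intervalIntegrable
          ((hrpow _).mul continuousOn_const).intervalIntegrable fun t ht => ?_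
        have ht0 : 0 < t := hτ0.trans_le ht.1
        calc t ^ b * ((a / t) ^ (lam - s) / (1 + a / t) ^ lam)
            ≤ t ^ b * ((t / τ) ^ s * K) := by
              gcongr
              exact profile_div_le_of_le ha hlam.1.le hτ0 ht.1
          _ = t ^ (b + s) * (K / τ ^ s) := by
              rw [rpow_add ht0, div_rpow ht0.le hτ0.le]
              ring
    _ = (∫ t in τ..(1 : ℝ), t ^ (b + s)) * (K / τ ^ s) := intervalIntegral.integral_mul_const _ _
    _ ≤ (-(b + s + 1))⁻¹ * τ ^ (b + s + 1) * (K / τ ^ s) := by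
        gcongr
        exact integral_rpow_to_one_le hb hτ0
    _ = (-(b + s + 1))⁻¹ * τ ^ (b + 1) * K := by
        have hs : 0 < τ ^ s := rpow_pos_of_pos hτ0 s
        rw [add_right_comm b s 1, rpow_add hτ0 (b + 1) s]
        generalize (-(b + 1 + s))⁻¹ = d
        field_simp
end

section
/- Let n be a positive integer, c₁, c₂ > 0, and let g : [0,1] → (0,∞) be continuously differentiable with c₁ r^n ≤ − r·g'(r)/g(r) ≤ c₂ r^n for all r ∈ [0,1]. Define M_g(τ,r) = (τ − 1)·r·g'(r)/g(r) and 𝒥(τ,r) = τ² + (2/3)·τ·M_g(τ,r). Then for every nonnegative integer m and every nonnegative integer k there exists a constant C > 0 such that for all τ ∈ (0,1] and r ∈ [0,1]: |∂_τ^m ( 𝒥(τ,r)^{-k} )| ≤ C · τ^{-2k−m} · (1 + r^n/τ)^{-k}. -/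
/-- Derivative of a product of inverse powers of `t` and of an affine function of `t`. -/
theorem hasDerivAt_inv_pow_mul_inv_affine_pow (k l : ℕ) {s b t : ℝ} (ht : t ≠ 0)
    (hq : s * t + b ≠ 0) :
    HasDerivAt (fun t => (t ^ k)⁻¹ * ((s * t + b) ^ l)⁻¹)
      ((-k) * ((t ^ (k + 1))⁻¹ * ((s * t + b) ^ l)⁻¹) +
        (-(l * s)) * ((t ^ k)⁻¹ * ((s * t + b) ^ (l + 1))⁻¹)) t := by
  have hlin : HasDerivAt (fun t => s * t + b) s t := by
    simpa using ((hasDerivAt_id t).const_mul s).add_const b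
  have hpow := ((hasDerivAt_id t).pow k).inv (pow_ne_zero k ht)
  have hqpow := (hlin.pow l).inv (pow_ne_zero l hq)
  refine (hpow.mul hqpow).congr_deriv ?_
  simp only [Pi.pow_apply, Pi.inv_apply, id]
  rcases k with _ | k <;> rcases l with _ | l <;> simp <;> field_simp <;> ring

theorem contDiffAt_inv_pow_mul_inv_affine_pow (k l : ℕ) {N : WithTop ℕ∞} {s b t : ℝ}
    (ht : t ≠ 0) (hq : s * t + b ≠ 0) :
    ContDiffAt ℝ N (fun t => (t ^ k)⁻¹ * ((s * t + b) ^ l)⁻¹) t :=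
  ((contDiffAt_id.pow k).inv (pow_ne_zero k ht)).mul
    ((((contDiffAt_const.mul contDiffAt_id).add contDiffAt_const).pow l).inv (pow_ne_zero l hq))

/-- Each derivative of `t⁻ᵏ (s t + b)⁻ˡ` costs at most one power of `t`, uniformly over bounded
slopes `s`, in the region where `s t + b` dominates `t`. -/
theorem exists_bound_iteratedDeriv_inv_pow_mul_inv_affine_pow {B δ : ℝ} (hB : 0 ≤ B)
    (hδ : 0 < δ) (m k l : ℕ) :
    ∃ C : ℝ, 0 < C ∧ ∀ s b τ : ℝ, |s| ≤ B → 0 < τ → δ * τ ≤ s * τ + b →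
      |iteratedDeriv m (fun t => (t ^ k)⁻¹ * ((s * t + b) ^ l)⁻¹) τ| ≤
        C * ((τ ^ (k + m))⁻¹ * ((s * τ + b) ^ l)⁻¹) := by
  induction m generalizing k l with
  | zero =>
    refine ⟨1, one_pos, fun s b τ _ hτ hq => ?_⟩
    have hq' : 0 < s * τ + b := (mul_pos hδ hτ).trans_le hq
    rw [iteratedDeriv_zero, abs_of_pos (by positivity)]
    simp
  | succ m ih =>
    obtain ⟨C₁, hC₁, h₁⟩ := ih (k + 1) l
    obtain ⟨C₂, hC₂, h₂⟩ := ih k (l + 1)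
    refine ⟨k * C₁ + l * B * (C₂ / δ) + 1, by positivity, fun s b τ hs hτ hq => ?_⟩
    have hq' : 0 < s * τ + b := (mul_pos hδ hτ).trans_le hq
    have hderiv : deriv (fun t => (t ^ k)⁻¹ * ((s * t + b) ^ l)⁻¹) =ᶠ[nhds τ]
        fun t => (-k) * ((t ^ (k + 1))⁻¹ * ((s * t + b) ^ l)⁻¹) +
          (-(l * s)) * ((t ^ k)⁻¹ * ((s * t + b) ^ (l + 1))⁻¹) := by
      have hcont : ContinuousAt (fun t => s * t + b) τ := by fun_prop
      filter_upwards [eventually_ne_nhds hτ.ne', hcont.eventually_ne hq'.ne'] with t ht hqt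
      exact (hasDerivAt_inv_pow_mul_inv_affine_pow k l ht hqt).deriv
    rw [iteratedDeriv_succ', hderiv.iteratedDeriv_eq,
      iteratedDeriv_fun_add
        (contDiffAt_const.mul (contDiffAt_inv_pow_mul_inv_affine_pow _ _ hτ.ne' hq'.ne'))
        (contDiffAt_const.mul (contDiffAt_inv_pow_mul_inv_affine_pow _ _ hτ.ne' hq'.ne')),
      iteratedDeriv_const_mul_field, iteratedDeriv_const_mul_field]
    have e₁ := h₁ s b τ hs hτ hq
    have e₂ := h₂ s b τ hs hτ hq
    rw [show k + 1 + m = k + (m + 1) by ring] at e₁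
    set X := (τ ^ (k + (m + 1)))⁻¹ * ((s * τ + b) ^ l)⁻¹ with hX
    have hX0 : 0 < X := by positivity
    have hcmp : (τ ^ (k + m))⁻¹ * ((s * τ + b) ^ (l + 1))⁻¹ ≤ X / δ := by
      have hinv : (s * τ + b)⁻¹ ≤ (δ * τ)⁻¹ := inv_anti₀ (by positivity) hq
      calc (τ ^ (k + m))⁻¹ * ((s * τ + b) ^ (l + 1))⁻¹
          = (τ ^ (k + m))⁻¹ * ((s * τ + b) ^ l)⁻¹ * (s * τ + b)⁻¹ := by
            rw [pow_succ, mul_inv]; ring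
        _ ≤ (τ ^ (k + m))⁻¹ * ((s * τ + b) ^ l)⁻¹ * (δ * τ)⁻¹ := by gcongr
        _ = X / δ := by rw [hX, ← add_assoc, pow_succ τ, mul_inv, mul_inv]; ring
    refine (abs_add_le _ _).trans ?_
    rw [abs_mul, abs_mul, abs_neg, abs_neg, abs_mul, Nat.abs_cast, Nat.abs_cast]
    calc _ ≤ k * (C₁ * X) + l * B * (C₂ * (X / δ)) := by
            gcongr
            exact e₂.trans (by gcongr)
      _ ≤ _ := by
            have : (k * C₁ + l * B * (C₂ / δ) + 1) * X
              = k * (C₁ * X) + l * B * (C₂ * (X / δ)) + X := by ring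
            linarith

/-- The affine factor `τ + b (1 - τ)` is comparable from below to `τ + ρ` if `b ≳ ρ`. -/
theorem mul_add_le_affine {d ρ τ b : ℝ} (hd0 : 0 ≤ d) (hd1 : d ≤ 1) (hρ0 : 0 ≤ ρ)
    (hρ1 : ρ ≤ 1) (hτ0 : 0 ≤ τ) (hτ1 : τ ≤ 1) (hb : d * ρ ≤ b) :
    d / 2 * (τ + ρ) ≤ (1 - b) * τ + b := by
  have h₁ : d * ρ * (1 - τ) ≤ b * (1 - τ) := mul_le_mul_of_nonneg_right hb (by linarith)
  have h₂ : d * ρ * τ ≤ d * τ :=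
    mul_le_mul_of_nonneg_right (mul_le_of_le_one_right hd0 hρ1) hτ0
  have h₃ : d * τ ≤ τ := mul_le_of_le_one_left hτ0 hd1
  have h₄ : 0 ≤ d * ρ * (1 - τ) := mul_nonneg (mul_nonneg hd0 hρ0) (by linarith)
  linarith

/-- Estimate (2.104) of Lemma 2.10: τ-derivatives of negative powers of the dust
Jacobian satisfy `|∂_τ^m (𝒥^{-k})| ≲ τ^{-2k-m} (1 + r^n/τ)^{-k}`. -/
theorem dust_jacobian_inverse_power_derivs (n : ℕ) (hn : 0 < n) (c₁ c₂ : ℝ)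
    (hc₁ : 0 < c₁) (hc₂ : 0 < c₂) (g g' : ℝ → ℝ)
    (hg_pos : ∀ r ∈ Set.Icc (0:ℝ) 1, 0 < g r)
    (hg_deriv : ∀ r ∈ Set.Icc (0:ℝ) 1, HasDerivWithinAt g (g' r) (Set.Icc 0 1) r)
    (hg'_cont : ContinuousOn g' (Set.Icc 0 1))
    (hbound : ∀ r ∈ Set.Icc (0:ℝ) 1,
      c₁ * r ^ n ≤ -(r * g' r / g r) ∧ -(r * g' r / g r) ≤ c₂ * r ^ n)
    (Mg J : ℝ → ℝ → ℝ)
    (hMg : ∀ τ r : ℝ, Mg τ r = (τ - 1) * r * g' r / g r)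
    (hJ : ∀ τ r : ℝ, J τ r = τ ^ 2 + (2/3) * τ * Mg τ r)
    (m k : ℕ) :
    ∃ C : ℝ, 0 < C ∧ ∀ τ ∈ Set.Ioc (0:ℝ) 1, ∀ r ∈ Set.Icc (0:ℝ) 1,
      |iteratedDeriv m (fun t => ((J t r) ^ k)⁻¹) τ| ≤
        C / (τ ^ (2 * k + m) * (1 + r ^ n / τ) ^ k) := by
  set d : ℝ := min 1 (2 / 3 * c₁)
  have hd0 : 0 < d := lt_min one_pos (by positivity)
  obtain ⟨C, hC, h⟩ := exists_bound_iteratedDeriv_inv_pow_mul_inv_affine_pow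
    (B := 1 + 2 / 3 * c₂) (δ := d / 2) (by positivity) (by positivity) m k k
  refine ⟨C * ((d / 2) ^ k)⁻¹, by positivity, fun τ ⟨hτ0, hτ1⟩ r hr => ?_⟩
  obtain ⟨hlow, hupp⟩ := hbound r hr
  set b : ℝ := 2 / 3 * -(r * g' r / g r) with hb
  have hρ0 : 0 ≤ r ^ n := pow_nonneg hr.1 n
  have hρ1 : r ^ n ≤ 1 := pow_le_one₀ hr.1 hr.2
  have hdb : d * r ^ n ≤ b := by
    have : d * r ^ n ≤ 2 / 3 * c₁ * r ^ n := by gcongr; exact min_le_right _ _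
    linarith
  have hb0 : 0 ≤ b := (mul_nonneg hd0.le hρ0).trans hdb
  have hs : |1 - b| ≤ 1 + 2 / 3 * c₂ := by
    have : c₂ * r ^ n ≤ c₂ := mul_le_of_le_one_right hc₂.le hρ1
    rw [abs_le]
    constructor <;> linarith
  have hq := mul_add_le_affine hd0.le (min_le_left _ _) hρ0 hρ1 hτ0.le hτ1 hdb
  have hfun : (fun t => ((J t r) ^ k)⁻¹) =
      fun t => (t ^ k)⁻¹ * (((1 - b) * t + b) ^ k)⁻¹ := by
    funext t
    rw [← mul_inv, ← mul_pow, hJ, hMg, hb]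
    congr 2
    ring
  rw [hfun]
  refine (h (1 - b) b τ hs hτ0 (le_trans (by gcongr; linarith) hq)).trans ?_
  calc C * ((τ ^ (k + m))⁻¹ * (((1 - b) * τ + b) ^ k)⁻¹)
      ≤ C * ((τ ^ (k + m))⁻¹ * ((d / 2 * (τ + r ^ n)) ^ k)⁻¹) := by gcongr
    _ = C * ((d / 2) ^ k)⁻¹ / (τ ^ (2 * k + m) * (1 + r ^ n / τ) ^ k) := by
      have hfac : τ + r ^ n = τ * (1 + r ^ n / τ) := by field_simp
      rw [hfac, mul_pow, mul_pow, show 2 * k + m = (k + m) + k by ring, pow_add τ (k + m) k,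
        div_eq_mul_inv]
      simp only [mul_inv]
      ring
end

section
/- Let n and K be positive integers, and let g : (0,1] → (0,∞) be smooth such that for every 1 ≤ j ≤ K+1 there is a constant C_j with |((r·d/dr)^j (log g))(r)| ≤ C_j r^n for all r ∈ (0,1]. Define M_g(τ,r) = (τ − 1)·r·g'(r)/g(r) and 𝒥(τ,r) = τ² + (2/3)·τ·M_g(τ,r). Then for all integers 0 ≤ m, ℓ ≤ K there exists C > 0 such that for all τ ∈ (0,1] and r ∈ (0,1]: |∂_τ^m 𝒥(τ,r)| ≤ C · τ² · r^{-nm} · (1 + r^n/τ)^{m+1}, and if ℓ ≥ 1 then |∂_τ^m ((r·∂_r)^ℓ 𝒥)(τ,r)| ≤ C · τ² · r^{-nm} · (1 + r^n/τ)^{m} · (r^n/τ), where (r·∂_r)^ℓ denotes ℓ iterations of the operator f ↦ r·∂_r f acting in the r-variable. -/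
/-- The radial scaling vector field `(r·d/dr) f (r) = r * f'(r)`. -/
noncomputable def rad : (ℝ → ℝ) → ℝ → ℝ := fun f r => r * deriv f r

open Filter Topology

lemma rad_congr {f h : ℝ → ℝ} {r : ℝ} (hfh : f =ᶠ[𝓝 r] h) : rad f =ᶠ[𝓝 r] rad h := by
  filter_upwards [hfh.deriv] with x hx
  simp only [rad, hx]

lemma rad_iterate_congr {f h : ℝ → ℝ} {r : ℝ} (hfh : f =ᶠ[𝓝 r] h) (k : ℕ) :
    rad^[k] f =ᶠ[𝓝 r] rad^[k] h := by
  induction k with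
  | zero => exact hfh
  | succ k ih =>
    simp only [Function.iterate_succ_apply']
    exact rad_congr ih

lemma rad_iterate_succ_const_add_mul (a c : ℝ) (f : ℝ → ℝ) (k : ℕ) :
    rad^[k + 1] (fun x => a + c * f x) = fun x => c * rad^[k + 1] f x := by
  induction k with
  | zero =>
    funext x
    simp only [zero_add, Function.iterate_one, rad, deriv_const_add,
      deriv_const_mul_field]
    ring
  | succ k ih =>
    rw [Function.iterate_succ_apply', ih]
    funext x
    rw [Function.iterate_succ_apply' rad (k + 1) f]
    simp only [rad, deriv_const_mul_field]
    ring

lemma rad_log_eventuallyEq {g : ℝ → ℝ} {r : ℝ} (hpos : 0 < g r) (hg : ContDiffAt ℝ 1 g r) :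
    (fun x => x * deriv g x / g x) =ᶠ[𝓝 r] rad (fun x => Real.log (g x)) := by
  filter_upwards [hg.eventually (by simp), hg.continuousAt.eventually (lt_mem_nhds hpos)]
    with x hx hx0
  simp only [rad]
  rw [deriv.log (hx.differentiableAt one_ne_zero) hx0.ne', mul_div_assoc]

lemma deriv_quadratic (a b : ℝ) :
    deriv (fun t : ℝ => a * t ^ 2 + b * t) = fun t => 2 * a * t + b := by
  funext t
  refine (((hasDerivAt_pow 2 t).const_mul a).add ((hasDerivAt_id t).const_mul b)).deriv.trans ?_
  norm_num
  ring

lemma deriv_affine (a b : ℝ) : deriv (fun t : ℝ => a * t + b) = fun _ => a := by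
  funext t
  simp

lemma iteratedDeriv_one_quadratic (a b τ : ℝ) :
    iteratedDeriv 1 (fun t : ℝ => a * t ^ 2 + b * t) τ = 2 * a * τ + b := by
  rw [iteratedDeriv_one, deriv_quadratic]

lemma iteratedDeriv_two_quadratic (a b τ : ℝ) :
    iteratedDeriv 2 (fun t : ℝ => a * t ^ 2 + b * t) τ = 2 * a := by
  rw [iteratedDeriv_succ', iteratedDeriv_one, deriv_quadratic, deriv_affine]

lemma iteratedDeriv_add_three_quadratic (a b τ : ℝ) (k : ℕ) :
    iteratedDeriv (k + 3) (fun t : ℝ => a * t ^ 2 + b * t) τ = 0 := by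
  rw [iteratedDeriv_succ', iteratedDeriv_succ', iteratedDeriv_succ', deriv_quadratic,
    deriv_affine]
  simp

/-- The `τ`-derivatives of `τ² + (2/3) A (τ² - τ)` with `|A| ≤ c x`. -/
lemma abs_iteratedDeriv_jacobian_le {A c x τ : ℝ} (hc : 0 < c) (hA : |A| ≤ c * x)
    (hx : 0 < x) (hx1 : x ≤ 1) (hτ : 0 < τ) (hτ1 : τ ≤ 1) (m : ℕ) :
    |iteratedDeriv m (fun t : ℝ => (1 + 2 / 3 * A) * t ^ 2 + (-(2 / 3 * A)) * t) τ| ≤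
      (2 + 2 * c) * τ ^ 2 * (1 + x / τ) ^ (m + 1) / x ^ m := by
  obtain ⟨hA1, hA2⟩ := abs_le.mp hA
  have hcx : 0 < c * x := mul_pos hc hx
  match m with
  | 0 =>
    have e : (2 + 2 * c) * τ ^ 2 * (1 + x / τ) ^ (0 + 1) / x ^ 0
        = (2 + 2 * c) * (τ * (τ + x)) := by
      rw [zero_add, pow_one]
      field_simp
    rw [e, iteratedDeriv_zero, abs_le]
    constructor <;>
      nlinarith [mul_pos hτ hτ, mul_pos hτ hcx, mul_pos hτ hx, mul_pos hc (mul_pos hτ hτ),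
        mul_nonneg (mul_nonneg hτ.le (sub_nonneg.2 hτ1)) (sub_nonneg.2 hA2),
        mul_nonneg (mul_nonneg hτ.le (sub_nonneg.2 hτ1)) (neg_le_iff_add_nonneg.1 hA1),
        mul_pos hτ (mul_pos hτ hcx)]
  | 1 =>
    have e : (2 + 2 * c) * τ ^ 2 * (1 + x / τ) ^ (1 + 1) / x ^ 1
        = (2 + 2 * c) * (2 * τ + x + τ ^ 2 / x) := by
      norm_num only
      field_simp
      ring
    have hq : 0 < (2 + 2 * c) * (τ ^ 2 / x) := by positivity
    rw [e, iteratedDeriv_one_quadratic, abs_le]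
    constructor <;>
      nlinarith [mul_nonneg hτ.le (sub_nonneg.2 hA2), mul_pos hc hτ,
        mul_nonneg hτ.le (neg_le_iff_add_nonneg.1 hA1),
        mul_nonneg (sub_nonneg.2 hτ1) (sub_nonneg.2 hA2),
        mul_nonneg (sub_nonneg.2 hτ1) (neg_le_iff_add_nonneg.1 hA1), mul_pos hτ hcx,
        mul_nonneg hcx.le (sub_nonneg.2 hτ1)]
  | 2 =>
    have e : (2 + 2 * c) * τ ^ 2 * (1 + x / τ) ^ (2 + 1) / x ^ 2
        = (2 + 2 * c) * (3 + (τ ^ 2 / x ^ 2 + 3 * τ / x + x / τ)) := by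
      norm_num only
      field_simp
      ring
    have hq : 0 < (2 + 2 * c) * (τ ^ 2 / x ^ 2 + 3 * τ / x + x / τ) := by positivity
    have hcx1 : c * x ≤ c := mul_le_of_le_one_right hc.le hx1
    rw [e, iteratedDeriv_two_quadratic, abs_le]
    constructor <;> linarith
  | k + 3 =>
    rw [iteratedDeriv_add_three_quadratic, abs_zero]
    positivity

/-- The `τ`-derivatives of `(2/3) A (τ² - τ)` with `|A| ≤ c x`. -/
lemma abs_iteratedDeriv_rad_jacobian_le {A c x τ : ℝ} (hc : 0 < c) (hA : |A| ≤ c * x)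
    (hx : 0 < x) (hx1 : x ≤ 1) (hτ : 0 < τ) (hτ1 : τ ≤ 1) (m : ℕ) :
    |iteratedDeriv m (fun t : ℝ => (2 / 3 * A) * t ^ 2 + (-(2 / 3 * A)) * t) τ| ≤
      (2 + 2 * c) * τ ^ 2 * (1 + x / τ) ^ m * (x / τ) / x ^ m := by
  obtain ⟨hA1, hA2⟩ := abs_le.mp hA
  have hcx : 0 < c * x := mul_pos hc hx
  match m with
  | 0 =>
    have e : (2 + 2 * c) * τ ^ 2 * (1 + x / τ) ^ 0 * (x / τ) / x ^ 0
        = (2 + 2 * c) * (τ * x) := by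
      field_simp
    rw [e, iteratedDeriv_zero, abs_le]
    constructor <;>
      nlinarith [mul_pos hτ hcx, mul_pos hτ hx,
        mul_nonneg (mul_nonneg hτ.le (sub_nonneg.2 hτ1)) (sub_nonneg.2 hA2),
        mul_nonneg (mul_nonneg hτ.le (sub_nonneg.2 hτ1)) (neg_le_iff_add_nonneg.1 hA1),
        mul_pos hτ (mul_pos hτ hcx)]
  | 1 =>
    have e : (2 + 2 * c) * τ ^ 2 * (1 + x / τ) ^ 1 * (x / τ) / x ^ 1
        = (2 + 2 * c) * (τ + x) := by
      field_simp
    rw [e, iteratedDeriv_one_quadratic, abs_le]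
    constructor <;>
      nlinarith [mul_nonneg hτ.le (sub_nonneg.2 hA2), mul_pos hc hτ,
        mul_nonneg hτ.le (neg_le_iff_add_nonneg.1 hA1),
        mul_nonneg (sub_nonneg.2 hτ1) (sub_nonneg.2 hA2),
        mul_nonneg (sub_nonneg.2 hτ1) (neg_le_iff_add_nonneg.1 hA1), mul_pos hτ hcx,
        mul_nonneg hcx.le (sub_nonneg.2 hτ1)]
  | 2 =>
    have e : (2 + 2 * c) * τ ^ 2 * (1 + x / τ) ^ 2 * (x / τ) / x ^ 2
        = (2 + 2 * c) * (2 + (τ / x + x / τ)) := by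
      field_simp
      ring
    have hq : 0 < (2 + 2 * c) * (τ / x + x / τ) := by positivity
    have hcx1 : c * x ≤ c := mul_le_of_le_one_right hc.le hx1
    rw [e, iteratedDeriv_two_quadratic, abs_le]
    constructor <;> linarith
  | k + 3 =>
    rw [iteratedDeriv_add_three_quadratic, abs_zero]
    positivity

/-- Estimate (2.102) of Lemma 2.10: mixed τ- and scaling-derivatives of the dust
Jacobian `𝒥(τ,r) = τ² + (2/3) τ M_g(τ,r)` satisfy
`|∂_τ^m 𝒥| ≲ τ² r^{-nm} (1 + r^n/τ)^{m+1}` and, for `ℓ ≥ 1`,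
`|∂_τ^m (r∂_r)^ℓ 𝒥| ≲ τ² r^{-nm} (1 + r^n/τ)^m (r^n/τ)`. -/
theorem dust_jacobian_mixed_derivs (n K : ℕ) (hn : 0 < n) (hK : 0 < K) (g : ℝ → ℝ)
    (hg_pos : ∀ r ∈ Set.Ioc (0:ℝ) 1, 0 < g r)
    (hg_smooth : ∀ r ∈ Set.Ioc (0:ℝ) 1, ContDiffAt ℝ (⊤ : ℕ∞) g r)
    (C : ℕ → ℝ)
    (hC : ∀ j, 1 ≤ j → j ≤ K + 1 → 0 < C j ∧
      ∀ r ∈ Set.Ioc (0:ℝ) 1, |rad^[j] (fun x => Real.log (g x)) r| ≤ C j * r ^ n)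
    (Mg J : ℝ → ℝ → ℝ)
    (hMg : ∀ τ r : ℝ, Mg τ r = (τ - 1) * r * deriv g r / g r)
    (hJ : ∀ τ r : ℝ, J τ r = τ ^ 2 + (2/3) * τ * Mg τ r) :
    ∀ m ℓ : ℕ, m ≤ K → ℓ ≤ K →
      ∃ C' : ℝ, 0 < C' ∧ ∀ τ ∈ Set.Ioc (0:ℝ) 1, ∀ r ∈ Set.Ioc (0:ℝ) 1,
        (ℓ = 0 → |iteratedDeriv m (fun t => J t r) τ| ≤
          C' * τ ^ 2 * (1 + r ^ n / τ) ^ (m + 1) / r ^ (n * m)) ∧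
        (1 ≤ ℓ → |iteratedDeriv m (fun t => rad^[ℓ] (fun ρ => J t ρ) r) τ| ≤
          C' * τ ^ 2 * (1 + r ^ n / τ) ^ m * (r ^ n / τ) / r ^ (n * m)) := by
  intro m ℓ _ hℓ
  obtain ⟨hc, hbound⟩ := hC (ℓ + 1) (by omega) (by omega)
  refine ⟨2 + 2 * C (ℓ + 1), by positivity, ?_⟩
  intro τ ⟨hτ, hτ1⟩ r hr
  have hx : 0 < r ^ n := pow_pos hr.1 n
  have hx1 : r ^ n ≤ 1 := pow_le_one₀ hr.1.le hr.2
  have hlog := rad_log_eventuallyEq (hg_pos r hr)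
    ((hg_smooth r hr).of_le (by exact_mod_cast le_top))
  have hA : |rad^[ℓ] (fun x => x * deriv g x / g x) r| ≤ C (ℓ + 1) * r ^ n := by
    rw [(rad_iterate_congr hlog ℓ).eq_of_nhds]
    exact hbound r hr
  have hJ' : ∀ t, (fun ρ => J t ρ) =
      fun ρ => t ^ 2 + (2 / 3 * t * (t - 1)) * (ρ * deriv g ρ / g ρ) := by
    intro t
    funext ρ
    rw [hJ, hMg]
    ring
  rw [pow_mul]
  constructor
  · rintro rfl
    convert abs_iteratedDeriv_jacobian_le hc hA hx hx1 hτ hτ1 m using 3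
    funext t
    rw [congrFun (hJ' t) r, Function.iterate_zero_apply]
    ring
  · intro hℓ1
    obtain ⟨k, rfl⟩ := Nat.exists_eq_add_of_le' hℓ1
    convert abs_iteratedDeriv_rad_jacobian_le hc hA hx hx1 hτ hτ1 m using 3
    funext t
    rw [hJ', rad_iterate_succ_const_add_mul]
    ring
end

section
/- Let χ : [0,1] → [0,∞) be a smooth cutoff function with χ = 1 on [0,1/2], χ = 0 on [3/4,1], and χ' ≤ 0 on [0,1]. Then there exists a constant C > 0, depending only on χ, such that for every continuously differentiable u : [0,1] → ℝ and for A being either Au = u' or Au = u' + (2/r)u: ∫_0^{3/4} u(r)² χ(r)² dr ≤ C · ( ∫_{1/2}^{3/4} u(r)² r² dr + ∫_0^{3/4} (Au)(r)² r² χ(r)² dr ). -/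
open Set intervalIntegral

/-- Integrating the derivative of `r u² χ²` for a cutoff `χ` vanishing at the right endpoint. -/
theorem integral_deriv_mul_sq_mul_cutoff_sq_eq_zero {u u' χ ψ : ℝ → ℝ} {b : ℝ} (hb : 0 ≤ b)
    (hu : ∀ r ∈ Icc 0 b, HasDerivWithinAt u (u' r) (Icc 0 b) r) (hu' : ContinuousOn u' (Icc 0 b))
    (hχ : ∀ r ∈ Icc 0 b, HasDerivWithinAt χ (ψ r) (Icc 0 b) r) (hψ : ContinuousOn ψ (Icc 0 b))
    (hχb : χ b = 0) :
    (∫ r in (0 : ℝ)..b, (u r ^ 2 * χ r ^ 2 + 2 * r * u r * u' r * χ r ^ 2 +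
      2 * r * u r ^ 2 * χ r * ψ r)) = 0 := by
  have cu : ContinuousOn u (Icc 0 b) := fun r hr => (hu r hr).continuousWithinAt
  have cχ : ContinuousOn χ (Icc 0 b) := fun r hr => (hχ r hr).continuousWithinAt
  have hderiv : ∀ r ∈ Ioo 0 b, HasDerivAt (fun r => r * u r ^ 2 * χ r ^ 2)
      (u r ^ 2 * χ r ^ 2 + 2 * r * u r * u' r * χ r ^ 2 + 2 * r * u r ^ 2 * χ r * ψ r) r := by
    intro r hr
    have hn : Icc 0 b ∈ nhds r := Icc_mem_nhds hr.1 hr.2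
    have h1 := (hu r (Ioo_subset_Icc_self hr)).hasDerivAt hn
    have h2 := (hχ r (Ioo_subset_Icc_self hr)).hasDerivAt hn
    refine (((hasDerivAt_id' r).fun_mul (h1.fun_pow 2)).fun_mul (h2.fun_pow 2)).congr_deriv ?_
    norm_num
    ring
  rw [integral_eq_sub_of_hasDerivAt_of_le hb (by fun_prop) hderiv
    (ContinuousOn.intervalIntegrable_of_Icc hb (by fun_prop))]
  simp [hχb]

/-- A function that is constant on `[a, b]` has vanishing one-sided derivatives there. -/
theorem derivWithin_Icc_eq_zero_of_eq_const {χ : ℝ → ℝ} {a b c k : ℝ} (hab : a < b) (hbc : b ≤ c)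
    (hχ : DifferentiableOn ℝ χ (Icc a c)) (hk : ∀ r ∈ Icc a b, χ r = k) {r : ℝ}
    (hr : r ∈ Icc a b) : derivWithin χ (Icc a c) r = 0 := by
  have hsub : Icc a b ⊆ Icc a c := Icc_subset_Icc_right hbc
  have h1 := ((hχ r (hsub hr)).hasDerivWithinAt).mono hsub
  have h2 : HasDerivWithinAt χ 0 (Icc a b) r :=
    (hasDerivWithinAt_const r (Icc a b) k).congr hk (hk r hr)
  exact (uniqueDiffOn_Icc hab r hr).eq_deriv _ h1 h2

/-- Lemma C.1 part (1): the localized Hardy inequality near the origin, for either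
`Au = u'` or `Au = u' + (2/r)u = D_r u`. -/
theorem localized_hardy_origin (χ : ℝ → ℝ)
    (hχ_smooth : ContDiffOn ℝ (⊤ : ℕ∞) χ (Set.Icc 0 1))
    (hχ_nonneg : ∀ r ∈ Set.Icc (0:ℝ) 1, 0 ≤ χ r)
    (hχ_one : ∀ r ∈ Set.Icc (0:ℝ) (1/2), χ r = 1)
    (hχ_zero : ∀ r ∈ Set.Icc (3/4:ℝ) 1, χ r = 0)
    (hχ' : ∀ r ∈ Set.Icc (0:ℝ) 1, deriv χ r ≤ 0) :
    ∃ C : ℝ, 0 < C ∧ ∀ u u' : ℝ → ℝ,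
      (∀ r ∈ Set.Icc (0:ℝ) 1, HasDerivWithinAt u (u' r) (Set.Icc 0 1) r) →
      ContinuousOn u' (Set.Icc 0 1) →
      ((∫ r in (0:ℝ)..(3/4), u r ^ 2 * χ r ^ 2) ≤
        C * ((∫ r in (1/2:ℝ)..(3/4), u r ^ 2 * r ^ 2) +
          ∫ r in (0:ℝ)..(3/4), u' r ^ 2 * r ^ 2 * χ r ^ 2)) ∧
      ((∫ r in (0:ℝ)..(3/4), u r ^ 2 * χ r ^ 2) ≤
        C * ((∫ r in (1/2:ℝ)..(3/4), u r ^ 2 * r ^ 2) +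
          ∫ r in (0:ℝ)..(3/4), (u' r + (2/r) * u r) ^ 2 * r ^ 2 * χ r ^ 2)) := by
  have hd : DifferentiableOn ℝ χ (Icc 0 1) := hχ_smooth.differentiableOn (by simp)
  set ψ : ℝ → ℝ := derivWithin χ (Icc 0 1) with hψ_def
  have cψ1 : ContinuousOn ψ (Icc 0 1) :=
    hχ_smooth.continuousOn_derivWithin (uniqueDiffOn_Icc zero_lt_one) (by simp)
  have cχ1 : ContinuousOn χ (Icc 0 1) := hd.continuousOn
  obtain ⟨M, hM⟩ := isCompact_Icc.exists_bound_of_continuousOn (cχ1.mul cψ1)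
  have hM0 : 0 ≤ M := (norm_nonneg _).trans (hM 0 (by simp))
  have hsub : Icc (0 : ℝ) (3 / 4) ⊆ Icc 0 1 := Icc_subset_Icc_right (by norm_num)
  have cχ := cχ1.mono hsub
  have cψ := cψ1.mono hsub
  refine ⟨8 * M + 4, by positivity, fun u u' hu1 hu1' => ?_⟩
  have hu : ∀ r ∈ Icc (0 : ℝ) (3 / 4), HasDerivWithinAt u (u' r) (Icc 0 (3 / 4)) r :=
    fun r hr => (hu1 r (hsub hr)).mono hsub
  have cu : ContinuousOn u (Icc 0 (3 / 4)) := fun r hr => (hu r hr).continuousWithinAt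
  have cu' : ContinuousOn u' (Icc 0 (3 / 4)) := hu1'.mono hsub
  have hF := integral_deriv_mul_sq_mul_cutoff_sq_eq_zero (by norm_num) hu cu'
    (fun r hr => ((hd r (hsub hr)).hasDerivWithinAt).mono hsub) cψ
    (hχ_zero (3 / 4) (by norm_num))
  have int {f : ℝ → ℝ} (hf : ContinuousOn f (Icc 0 (3 / 4))) :
      IntervalIntegrable f MeasureTheory.volume 0 (3 / 4) := hf.intervalIntegrable_of_Icc (by norm_num)
  have hJ : |∫ r in (0 : ℝ)..(3 / 4), r * u r ^ 2 * χ r * ψ r| ≤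
      2 * M * ∫ r in (1 / 2 : ℝ)..(3 / 4), u r ^ 2 * r ^ 2 := by
    have cJ : ContinuousOn (fun r => r * u r ^ 2 * χ r * ψ r) (Icc 0 (3 / 4)) := by fun_prop
    have hzero : (∫ r in (0 : ℝ)..(1 / 2), r * u r ^ 2 * χ r * ψ r) = 0 := by
      rw [integral_congr (g := fun _ => 0), integral_zero]
      intro r hr
      rw [uIcc_of_le (by norm_num)] at hr
      simp [hψ_def, derivWithin_Icc_eq_zero_of_eq_const (by norm_num) (by norm_num) hd hχ_one hr]
    rw [← integral_add_adjacent_intervals (b := 1 / 2)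
      ((cJ.mono (Icc_subset_Icc_right (by norm_num))).intervalIntegrable_of_Icc (by norm_num))
      ((cJ.mono (Icc_subset_Icc_left (by norm_num))).intervalIntegrable_of_Icc (by norm_num)),
      hzero, zero_add, ← integral_const_mul, ← Real.norm_eq_abs]
    have hs : Icc (1 / 2 : ℝ) (3 / 4) ⊆ Icc 0 (3 / 4) := Icc_subset_Icc_left (by norm_num)
    refine norm_integral_le_of_norm_le (by norm_num) (.of_forall fun r hr => ?_)
      (ContinuousOn.intervalIntegrable_of_Icc (by norm_num) (by have := cu.mono hs; fun_prop))
    have hb : |χ r * ψ r| ≤ M := hM r ⟨by linarith [hr.1], by linarith [hr.2]⟩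
    have hr0 : 0 ≤ r := by linarith [hr.1]
    calc ‖r * u r ^ 2 * χ r * ψ r‖ = r * u r ^ 2 * |χ r * ψ r| := by
          rw [mul_assoc, Real.norm_eq_abs, abs_mul, abs_of_nonneg (by positivity)]
      _ ≤ (2 * r ^ 2) * u r ^ 2 * M := by
          gcongr
          nlinarith [hr.1]
      _ = 2 * M * (u r ^ 2 * r ^ 2) := by ring
  have hP : 0 ≤ ∫ r in (1 / 2 : ℝ)..(3 / 4), u r ^ 2 * r ^ 2 :=
    integral_nonneg (by norm_num) fun r _ => by positivity
  obtain ⟨hJ1, hJ2⟩ := abs_le.1 hJ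
  have hMP := mul_nonneg hM0 hP
  set F' : ℝ → ℝ := fun r => u r ^ 2 * χ r ^ 2 + 2 * r * u r * u' r * χ r ^ 2 +
      2 * r * u r ^ 2 * χ r * ψ r with hF'_def
  have cF' : ContinuousOn F' (Icc 0 (3 / 4)) := by fun_prop
  constructor
  · have hQ : 0 ≤ ∫ r in (0 : ℝ)..(3 / 4), u' r ^ 2 * r ^ 2 * χ r ^ 2 :=
      integral_nonneg (by norm_num) fun r _ => by positivity
    have hle : (∫ r in (0 : ℝ)..(3 / 4), u r ^ 2 * χ r ^ 2) ≤ ∫ r in (0 : ℝ)..(3 / 4),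
        (2 * F' r + 4 * (u' r ^ 2 * r ^ 2 * χ r ^ 2) - 4 * (r * u r ^ 2 * χ r * ψ r)) := by
      refine integral_mono_on (by norm_num) (int (by fun_prop)) (int (by fun_prop)) fun r _ => ?_
      simp only [hF'_def]
      nlinarith [sq_nonneg ((u r + 2 * r * u' r) * χ r)]
    rw [integral_sub (int (by fun_prop)) (int (by fun_prop)),
      integral_add (int (by fun_prop)) (int (by fun_prop)), integral_const_mul,
      integral_const_mul, integral_const_mul, hF] at hle
    nlinarith [mul_nonneg hM0 hQ]
  · have hcongr : (∫ r in (0 : ℝ)..(3 / 4), (u' r + (2 / r) * u r) ^ 2 * r ^ 2 * χ r ^ 2) =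
        ∫ r in (0 : ℝ)..(3 / 4), (r * u' r + 2 * u r) ^ 2 * χ r ^ 2 := by
      refine integral_congr_ae (.of_forall fun r hr => ?_)
      rw [uIoc_of_le (by norm_num)] at hr
      have : r ≠ 0 := hr.1.ne'
      field_simp
    rw [hcongr]
    have hQ : 0 ≤ ∫ r in (0 : ℝ)..(3 / 4), (r * u' r + 2 * u r) ^ 2 * χ r ^ 2 :=
      integral_nonneg (by norm_num) fun r _ => by positivity
    have hle : (∫ r in (0 : ℝ)..(3 / 4), u r ^ 2 * χ r ^ 2) ≤ ∫ r in (0 : ℝ)..(3 / 4),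
        ((r * u' r + 2 * u r) ^ 2 * χ r ^ 2 + 2 * (r * u r ^ 2 * χ r * ψ r) - F' r) := by
      refine integral_mono_on (by norm_num) (int (by fun_prop)) (int (by fun_prop)) fun r _ => ?_
      simp only [hF'_def]
      nlinarith [sq_nonneg ((u r - (r * u' r + 2 * u r)) * χ r), sq_nonneg (u r * χ r)]
    rw [integral_sub (int (by fun_prop)) (int cF'),
      integral_add (int (by fun_prop)) (int (by fun_prop)), integral_const_mul, hF] at hle
    nlinarith [mul_nonneg hM0 hQ]
end

section
/- Define D_r f(r) = f'(r) + (2/r)·f(r) and the operators 𝒟_0 = id, 𝒟_{2m} = (∂_r D_r)^m, 𝒟_{2m+1} = D_r (∂_r D_r)^m for m ≥ 0, and 𝒟̄_0 = id, 𝒟̄_i = 𝒟_{i-1} ∘ ∂_r for i ≥ 1. Then for every positive integer i, every smooth X : (0,1) → ℝ, and every r ∈ (0,1): (𝒟_i X)(r) = r · ( d/dr [ 𝒟̄_{i-1}(X/r) ] )(r) + (i+2) · (𝒟̄_{i-1}(X/r))(r), where X/r denotes the function r ↦ X(r)/r. -/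
/-- The radial divergence `D_r f (r) = f'(r) + (2/r) f(r)`. -/
noncomputable def Dr (f : ℝ → ℝ) : ℝ → ℝ := fun r => deriv f r + (2 / r) * f r

/-- The alternating high-order operators: `𝒟_0 = id`, `𝒟_{2m} = (∂_r D_r)^m`,
`𝒟_{2m+1} = D_r (∂_r D_r)^m`. -/
noncomputable def Dcal : ℕ → (ℝ → ℝ) → ℝ → ℝ
  | 0 => fun f => f
  | j + 1 => fun f => if j % 2 = 0 then Dr (Dcal j f) else deriv (Dcal j f)

/-- `𝒟̄_0 = id`, `𝒟̄_i = 𝒟_{i-1} ∘ ∂_r` for `i ≥ 1`. -/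
noncomputable def Dbar : ℕ → (ℝ → ℝ) → ℝ → ℝ
  | 0 => fun f => f
  | i + 1 => fun f => Dcal i (deriv f)

theorem ContDiffOn.deriv_infty {f : ℝ → ℝ} {s : Set ℝ} (hs : IsOpen s)
    (hf : ContDiffOn ℝ (⊤ : ℕ∞) f s) : ContDiffOn ℝ (⊤ : ℕ∞) (deriv f) s :=
  hf.deriv_of_isOpen hs (by exact_mod_cast le_top)

theorem ContDiffOn.differentiableAt_of_isOpen {f : ℝ → ℝ} {s : Set ℝ} (hs : IsOpen s)
    (hf : ContDiffOn ℝ (⊤ : ℕ∞) f s) {r : ℝ} (hr : r ∈ s) : DifferentiableAt ℝ f r :=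
  (hf.contDiffAt (hs.mem_nhds hr)).differentiableAt (by simp)

theorem ContDiffOn.Dr {f : ℝ → ℝ} {s : Set ℝ} (hs : IsOpen s) (h0 : (0 : ℝ) ∉ s)
    (hf : ContDiffOn ℝ (⊤ : ℕ∞) f s) : ContDiffOn ℝ (⊤ : ℕ∞) (Dr f) s :=
  (hf.deriv_infty hs).add
    ((contDiffOn_const.div contDiffOn_id fun _ hx h => h0 (h ▸ hx)).mul hf)

theorem Dcal_succ (n : ℕ) (f : ℝ → ℝ) :
    Dcal (n + 1) f = if n % 2 = 0 then Dr (Dcal n f) else deriv (Dcal n f) := rfl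

/-- In the barred operators, the derivative and the radial divergence alternate in the opposite
order. -/
theorem Dbar_succ (n : ℕ) (f : ℝ → ℝ) :
    Dbar (n + 1) f = if n % 2 = 0 then deriv (Dbar n f) else Dr (Dbar n f) := by
  cases n with
  | zero => rfl
  | succ k =>
    change Dcal (k + 1) (deriv f) = _
    rw [Dcal_succ]
    rcases Nat.mod_two_eq_zero_or_one k with h | h
    · rw [if_pos h, if_neg (by omega)]; rfl
    · rw [if_neg (by omega), if_pos (by omega)]; rfl

theorem ContDiffOn.Dbar {f : ℝ → ℝ} {s : Set ℝ} (hs : IsOpen s) (h0 : (0 : ℝ) ∉ s)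
    (hf : ContDiffOn ℝ (⊤ : ℕ∞) f s) (n : ℕ) : ContDiffOn ℝ (⊤ : ℕ∞) (Dbar n f) s := by
  induction n with
  | zero => exact hf
  | succ n ih =>
    rw [Dbar_succ]
    split_ifs
    · exact ih.deriv_infty hs
    · exact ih.Dr hs h0

/-- The derivative of a function that agrees on an open set with `r W' + c W`. -/
theorem deriv_of_eqOn_mul_deriv_add {F W : ℝ → ℝ} {s : Set ℝ} (hs : IsOpen s)
    (hW : ContDiffOn ℝ (⊤ : ℕ∞) W s) {c : ℝ}
    (hF : ∀ r ∈ s, F r = r * deriv W r + c * W r) {r : ℝ} (hr : r ∈ s) :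
    deriv F r = r * deriv (deriv W) r + (c + 1) * deriv W r := by
  have hW₁ := (hW.differentiableAt_of_isOpen hs hr).hasDerivAt
  have hW₂ := ((hW.deriv_infty hs).differentiableAt_of_isOpen hs hr).hasDerivAt
  have h : HasDerivAt (fun x => x * deriv W x + c * W x)
      (1 * deriv W r + r * deriv (deriv W) r + c * deriv W r) r :=
    ((hasDerivAt_id' r).mul hW₂).add (hW₁.const_mul c)
  have hFW : F =ᶠ[nhds r] fun x => x * deriv W x + c * W x :=
    Filter.eventuallyEq_of_mem (hs.mem_nhds hr) hF
  rw [hFW.deriv_eq, h.deriv]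
  ring

theorem deriv_Dr {W : ℝ → ℝ} {s : Set ℝ} (hs : IsOpen s) (h0 : (0 : ℝ) ∉ s)
    (hW : ContDiffOn ℝ (⊤ : ℕ∞) W s) {r : ℝ} (hr : r ∈ s) :
    deriv (Dr W) r = deriv (deriv W) r + 2 / r * deriv W r - 2 / r ^ 2 * W r := by
  have hr0 : r ≠ 0 := fun h => h0 (h ▸ hr)
  have hW₁ := (hW.differentiableAt_of_isOpen hs hr).hasDerivAt
  have hW₂ := ((hW.deriv_infty hs).differentiableAt_of_isOpen hs hr).hasDerivAt
  have h : HasDerivAt (Dr W) _ r :=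
    hW₂.add (((hasDerivAt_const r (2 : ℝ)).div (hasDerivAt_id' r) hr0).mul hW₁)
  rw [h.deriv]
  simp only [Pi.div_apply]
  field_simp
  ring

/-- The identity on an arbitrary open set avoiding the origin. -/
theorem Dcal_succ_eq_Dbar_of_div {X : ℝ → ℝ} {s : Set ℝ} (hs : IsOpen s) (h0 : (0 : ℝ) ∉ s)
    (hX : ContDiffOn ℝ (⊤ : ℕ∞) X s) (n : ℕ) :
    ∀ r ∈ s, Dcal (n + 1) X r =
      r * deriv (Dbar n (fun x => X x / x)) r +
        ((n : ℝ) + 3) * Dbar n (fun x => X x / x) r := by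
  have hne : ∀ r ∈ s, r ≠ 0 := fun r hr h => h0 (h ▸ hr)
  have hY : ContDiffOn ℝ (⊤ : ℕ∞) (fun x => X x / x) s := hX.div contDiffOn_id hne
  induction n with
  | zero =>
    intro r hr
    have hr0 := hne r hr
    have hX₁ := (hX.differentiableAt_of_isOpen hs hr).hasDerivAt
    have h : HasDerivAt (fun x => X x / x) _ r := hX₁.div (hasDerivAt_id' r) hr0
    change Dr X r = r * deriv (fun x => X x / x) r + _ * (X r / r)
    simp only [Dr, h.deriv]
    norm_num
    field_simp
    ring
  | succ n ih =>
    intro r hr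
    have hr0 := hne r hr
    have hW := hY.Dbar hs h0 n
    have hd := deriv_of_eqOn_mul_deriv_add hs hW ih hr
    rw [Dcal_succ, Dbar_succ]
    rcases Nat.mod_two_eq_zero_or_one n with h | h
    · rw [if_neg (by omega), if_pos h, hd]
      push_cast
      ring
    · rw [if_pos (by omega), if_neg (by omega), deriv_Dr hs h0 hW hr]
      simp only [Dr]
      rw [hd, ih r hr]
      push_cast
      field_simp
      ring

/-- Identity (A.399) of Lemma A.1:
`𝒟_i X = r ∂_r 𝒟̄_{i-1}(X/r) + (i+2) 𝒟̄_{i-1}(X/r)`. -/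
theorem Dcal_eq_Dbar_of_div (i : ℕ) (hi : 0 < i) (X : ℝ → ℝ)
    (hX : ContDiffOn ℝ (⊤ : ℕ∞) X (Set.Ioo 0 1)) :
    ∀ r ∈ Set.Ioo (0:ℝ) 1,
      Dcal i X r =
        r * deriv (Dbar (i - 1) (fun x => X x / x)) r +
          ((i : ℝ) + 2) * Dbar (i - 1) (fun x => X x / x) r := by
  obtain ⟨n, rfl⟩ := Nat.exists_eq_succ_of_ne_zero hi.ne'
  intro r hr
  rw [Nat.succ_eq_add_one, Dcal_succ_eq_Dbar_of_div isOpen_Ioo (by simp) hX n r hr]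
  simp only [Nat.add_sub_cancel]
  push_cast
  ring
end

section
/- Let I ⊆ (0,∞) be an open interval, let k ∈ ℝ, and let w : I → (0,∞) be three times differentiable. Define D_r f(r) = f'(r) + (2/r) f(r), L_k f = − w^{-k} ( w^{1+k} D_r f )', and L_k^* h = − w^{-k} D_r ( w^{1+k} h' ). Then for every three times differentiable f : I → ℝ and every r ∈ I: ( D_r (L_k f) )(r) = ( L_{1+k}^* (D_r f) )(r) − (1+k)·( w''(r) + (2/r) w'(r) )·(D_r f)(r), and ( ∂_r (L_k^* f) )(r) = ( L_{1+k} (∂_r f) )(r) − (1+k)·( w''(r) − (2/r) w'(r) )·(∂_r f)(r). -/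
/-- The degenerate elliptic operator `L_k f = -w^{-k} ∂_r (w^{1+k} D_r f)` of (4.170). -/
noncomputable def Lop (w : ℝ → ℝ) (k : ℝ) (f : ℝ → ℝ) : ℝ → ℝ :=
  fun r => -((w r) ^ (-k) * deriv (fun ρ => (w ρ) ^ (1 + k) * Dr f ρ) r)

/-- The degenerate elliptic operator `L_k^* h = -w^{-k} D_r (w^{1+k} ∂_r h)` of (4.171). -/
noncomputable def Lstar (w : ℝ → ℝ) (k : ℝ) (f : ℝ → ℝ) : ℝ → ℝ :=
  fun r => -((w r) ^ (-k) * Dr (fun ρ => (w ρ) ^ (1 + k) * deriv f ρ) r)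

/-- The weighted product rule `w^{-k} (w^{1+k} g)' = (1+k) w' g + w g'`. -/
theorem rpow_neg_mul_deriv_rpow_mul {w g : ℝ → ℝ} {r : ℝ} (k : ℝ) (hw : 0 < w r)
    (hwd : DifferentiableAt ℝ w r) (hg : DifferentiableAt ℝ g r) :
    (w r) ^ (-k) * deriv (fun ρ => (w ρ) ^ (1 + k) * g ρ) r =
      (1 + k) * deriv w r * g r + w r * deriv g r := by
  have hpow := hwd.hasDerivAt.rpow_const (p := 1 + k) (Or.inl hw.ne')
  rw [(hpow.fun_mul hg.hasDerivAt).deriv, add_sub_cancel_left, Real.rpow_add hw, Real.rpow_one,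
    Real.rpow_neg hw.le]
  have : (w r) ^ k ≠ 0 := (Real.rpow_pos_of_pos hw k).ne'
  field_simp

theorem hasDerivAt_Dr {f : ℝ → ℝ} {r : ℝ} (hr : r ≠ 0) (hf : DifferentiableAt ℝ f r)
    (hf' : DifferentiableAt ℝ (deriv f) r) :
    HasDerivAt (Dr f) (deriv (deriv f) r + (2 / r * deriv f r - 2 / r ^ 2 * f r)) r := by
  have hinv : HasDerivAt (fun ρ : ℝ => 2 / ρ) (-2 / r ^ 2) r := by
    simpa using (hasDerivAt_const r (2 : ℝ)).fun_div (hasDerivAt_id' r) hr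
  refine (hf'.hasDerivAt.fun_add (hinv.fun_mul hf.hasDerivAt)).congr_deriv ?_
  ring

theorem Lop_apply {w f : ℝ → ℝ} {r : ℝ} (k : ℝ) (hw : 0 < w r)
    (hwd : DifferentiableAt ℝ w r) (hf : DifferentiableAt ℝ (Dr f) r) :
    Lop w k f r = -((1 + k) * deriv w r * Dr f r + w r * deriv (Dr f) r) := by
  rw [Lop, rpow_neg_mul_deriv_rpow_mul k hw hwd hf]

theorem Lstar_apply {w f : ℝ → ℝ} {r : ℝ} (k : ℝ) (hw : 0 < w r)
    (hwd : DifferentiableAt ℝ w r) (hf : DifferentiableAt ℝ (deriv f) r) :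
    Lstar w k f r = -((1 + k) * deriv w r * deriv f r + w r * Dr (deriv f) r) := by
  have hpow : (w r) ^ (-k) * (w r) ^ (1 + k) = w r := by
    rw [← Real.rpow_add hw, neg_add_cancel_comm_assoc, Real.rpow_one]
  simp only [Lstar, Dr]
  rw [mul_add, rpow_neg_mul_deriv_rpow_mul k hw hwd hf]
  linear_combination (-(2 / r) * deriv f r) * hpow

/-- Derivative of the expanded operator `-((1+k) w' g + w h)`. -/
theorem hasDerivAt_neg_deriv_mul_add_mul {w g h : ℝ → ℝ} {g' h' r : ℝ} (k : ℝ)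
    (hw : DifferentiableAt ℝ w r) (hw' : DifferentiableAt ℝ (deriv w) r)
    (hg : HasDerivAt g g' r) (hh : HasDerivAt h h' r) :
    HasDerivAt (fun ρ => -((1 + k) * deriv w ρ * g ρ + w ρ * h ρ))
      (-((1 + k) * deriv (deriv w) r * g r + (1 + k) * deriv w r * g' +
        (deriv w r * h r + w r * h'))) r :=
  (((hw'.hasDerivAt.const_mul (1 + k)).fun_mul hg).fun_add (hw.hasDerivAt.fun_mul hh)).fun_neg

/-- The commutation rules (B.411) and (B.412):
`D_r (L_k f) = L_{1+k}^* (D_r f) - (1+k)(w'' + (2/r) w') D_r f` and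
`∂_r (L_k^* f) = L_{1+k} (∂_r f) - (1+k)(w'' - (2/r) w') ∂_r f`. -/
theorem commutation_rules_Dr_L (I : Set ℝ) (hI : IsOpen I) (hIpos : I ⊆ Set.Ioi 0)
    (k : ℝ) (w : ℝ → ℝ) (hw_pos : ∀ r ∈ I, 0 < w r)
    (hw_d1 : ∀ r ∈ I, DifferentiableAt ℝ w r)
    (hw_d2 : ∀ r ∈ I, DifferentiableAt ℝ (deriv w) r)
    (hw_d3 : ∀ r ∈ I, DifferentiableAt ℝ (deriv (deriv w)) r)
    (f : ℝ → ℝ)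
    (hf_d1 : ∀ r ∈ I, DifferentiableAt ℝ f r)
    (hf_d2 : ∀ r ∈ I, DifferentiableAt ℝ (deriv f) r)
    (hf_d3 : ∀ r ∈ I, DifferentiableAt ℝ (deriv (deriv f)) r) :
    ∀ r ∈ I,
      Dr (Lop w k f) r =
        Lstar w (1 + k) (Dr f) r -
          (1 + k) * (deriv (deriv w) r + (2 / r) * deriv w r) * Dr f r ∧
      deriv (Lstar w k f) r =
        Lop w (1 + k) (deriv f) r -
          (1 + k) * (deriv (deriv w) r - (2 / r) * deriv w r) * deriv f r := by
  intro r hr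
  have hI_nhds : ∀ᶠ ρ in nhds r, ρ ∈ I := hI.mem_nhds hr
  have hne : ∀ ρ ∈ I, ρ ≠ 0 := fun ρ hρ => (hIpos hρ).ne'
  have hDf : ∀ ρ ∈ I, HasDerivAt (Dr f) _ ρ := fun ρ hρ =>
    hasDerivAt_Dr (hne ρ hρ) (hf_d1 ρ hρ) (hf_d2 ρ hρ)
  have hDf' := hasDerivAt_Dr (hne r hr) (hf_d2 r hr) (hf_d3 r hr)
  constructor
  · have hDf_d2 : DifferentiableAt ℝ (deriv (Dr f)) r := by
      have heq : deriv (Dr f) =ᶠ[nhds r]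
          fun ρ => deriv (deriv f) ρ + (2 / ρ * deriv f ρ - 2 / ρ ^ 2 * f ρ) :=
        hI_nhds.mono fun ρ hρ => (hDf ρ hρ).deriv
      refine DifferentiableAt.congr_of_eventuallyEq ?_ heq
      have h1 := hf_d1 r hr
      have h2 := hf_d2 r hr
      have h3 := hf_d3 r hr
      have h0 := hne r hr
      fun_prop (disch := positivity)
    have heq : Lop w k f =ᶠ[nhds r]
        fun ρ => -((1 + k) * deriv w ρ * Dr f ρ + w ρ * deriv (Dr f) ρ) :=
      hI_nhds.mono fun ρ hρ =>
        Lop_apply k (hw_pos ρ hρ) (hw_d1 ρ hρ) (hDf ρ hρ).differentiableAt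
    have hderiv := (hasDerivAt_neg_deriv_mul_add_mul k (hw_d1 r hr) (hw_d2 r hr)
      (hDf r hr).differentiableAt.hasDerivAt hDf_d2.hasDerivAt).deriv
    rw [Dr, heq.deriv_eq, hderiv, heq.eq_of_nhds,
      Lstar_apply (1 + k) (hw_pos r hr) (hw_d1 r hr) hDf_d2, Dr.eq_def (deriv (Dr f))]
    ring
  · have heq : Lstar w k f =ᶠ[nhds r]
        fun ρ => -((1 + k) * deriv w ρ * deriv f ρ + w ρ * Dr (deriv f) ρ) :=
      hI_nhds.mono fun ρ hρ => Lstar_apply k (hw_pos ρ hρ) (hw_d1 ρ hρ) (hf_d2 ρ hρ)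
    have hderiv := (hasDerivAt_neg_deriv_mul_add_mul k (hw_d1 r hr) (hw_d2 r hr)
      (hf_d2 r hr).hasDerivAt hDf').deriv
    rw [heq.deriv_eq, hderiv,
      Lop_apply (1 + k) (hw_pos r hr) (hw_d1 r hr) hDf'.differentiableAt, hDf'.deriv, Dr]
    ring
end
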